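/- Let M = cQ + εD ∈ 𝔻ℍ[t] be a bounded monic reduced motion polynomial with c ∈ ℝ[t], Q, D ∈ ℍ[t], and mrpf(Q) = 1, and let M = ∏_{i=1}^r (cᵢQᵢ + εDᵢ) be a factorization into monic motion polynomials with cᵢ ∈ ℝ[t], Qᵢ, Dᵢ ∈ ℍ[t], mrpf(Qᵢ) = 1, and ν(cᵢQᵢ + εDᵢ) = Nᵢ^{nᵢ} for pairwise coprime real irreducible quadratic polynomials N₁, …, N_r and positive integers n₁, …, n_r. Define g_{iL} := mrpf(cᵢ, Qᵢ*·Dᵢ), g_{iR} := mrpf(cᵢ, Dᵢ·Qᵢ*), gᵢ := mrpf of cᵢ, Dᵢ·Qᵢ* and Qᵢ*·Dᵢ jointly, and g_L := mrpf(c, Q*·D), g_R := mrpf(c, D·Q*), g := the greatest common monic real polynomial divisor of c, D·Q*, and Q*·D. Then g_L = ∏_{i=1}^r g_{iL}, g_R = ∏_{i=1}^r g_{iR}, and g = ∏_{i=1}^r gᵢ. -/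

import Mathlib

open Polynomial DualNumber TrivSqZeroExt

noncomputable section

/-- The real quaternions. -/
abbrev Hq : Type := Quaternion ℝ

/-- The dual quaternions. -/
abbrev DHq : Type := DualNumber Hq

/-- Conjugation of a dual quaternion: `(p + ε d)* = p* + ε d*`. -/
instance : Star DHq := ⟨fun x => inl (star x.fst) + inr (star x.snd)⟩

/-- Coefficient-wise (quaternion) conjugation of a polynomial. -/
def cstar {R : Type*} [Semiring R] [Star R] (A : R[X]) : R[X] :=
  A.sum fun n a => Polynomial.C (star a) * Polynomial.X ^ n

/-- The embedding `ℝ[t] → ℍ[t]`. -/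
def qPoly (f : ℝ[X]) : Hq[X] := f.map (algebraMap ℝ Hq)

/-- The embedding `ℍ[t] → 𝔻ℍ[t]` (primal part). -/
def dhQ (P : Hq[X]) : DHq[X] := P.map (inlHom Hq Hq)

/-- The embedding `ℝ[t] → 𝔻ℍ[t]`. -/
def dPoly (f : ℝ[X]) : DHq[X] := dhQ (qPoly f)

/-- The dual quaternion polynomial `P + ε D` with primal part `P` and dual part `D`. -/
def mp (P D : Hq[X]) : DHq[X] := dhQ P + Polynomial.C ε * dhQ D

/-- The primal part of a dual quaternion polynomial. -/
def primal (A : DHq[X]) : Hq[X] := A.map (fstHom ℝ Hq Hq).toRingHom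

/-- A motion polynomial: a dual quaternion polynomial whose norm polynomial
`ν(M) = M·M*` is a nonzero real polynomial. -/
def IsMotion (M : DHq[X]) : Prop := ∃ f : ℝ[X], f ≠ 0 ∧ M * cstar M = dPoly f

/-- A real polynomial divides a quaternion polynomial. -/
def RDvdQ (f : ℝ[X]) (A : Hq[X]) : Prop := ∃ B : Hq[X], A = qPoly f * B

/-- A real polynomial divides a dual quaternion polynomial. -/
def RDvdD (f : ℝ[X]) (A : DHq[X]) : Prop := ∃ B : DHq[X], A = dPoly f * B

/-- `g` is the greatest common monic real polynomial divisor of a quaternion polynomial `A`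
(with itself), i.e. `g = mrpf A`. -/
def IsMrpfQ (g : ℝ[X]) (A : Hq[X]) : Prop :=
  g.Monic ∧ RDvdQ g A ∧ ∀ f : ℝ[X], f.Monic → RDvdQ f A → f ∣ g

/-- `g` is the greatest common monic real polynomial divisor of `c ∈ ℝ[t]` and a quaternion
polynomial `A`, i.e. `g = mrpf(c, A)`. -/
def IsMrpf2 (g : ℝ[X]) (c : ℝ[X]) (A : Hq[X]) : Prop :=
  g.Monic ∧ g ∣ c ∧ RDvdQ g A ∧
    ∀ f : ℝ[X], f.Monic → f ∣ c → RDvdQ f A → f ∣ g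

/-- `g` is the greatest common monic real polynomial divisor of `c ∈ ℝ[t]` and two quaternion
polynomials `A` and `B`, i.e. `g = mrpf(c, A, B)`. -/
def IsMrpf3 (g : ℝ[X]) (c : ℝ[X]) (A B : Hq[X]) : Prop :=
  g.Monic ∧ g ∣ c ∧ RDvdQ g A ∧ RDvdQ g B ∧
    ∀ f : ℝ[X], f.Monic → f ∣ c → RDvdQ f A → RDvdQ f B → f ∣ g

/-- A quaternion polynomial is reduced: `mrpf = 1`, i.e. it has only constant real
polynomial factors. -/
def ReducedQ (A : Hq[X]) : Prop := ∀ f : ℝ[X], f.Monic → RDvdQ f A → f = 1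

/-- A dual quaternion polynomial is reduced: `mrpf = 1`. -/
def ReducedD (A : DHq[X]) : Prop := ∀ f : ℝ[X], f.Monic → RDvdD f A → f = 1

/-- Boundedness of a (monic reduced) motion polynomial: `mrpf` of its primal part has
no real root, equivalently no linear real polynomial `t - a` divides the primal part. -/
def BoundedD (M : DHq[X]) : Prop :=
  ∀ a : ℝ, ¬ RDvdQ (Polynomial.X - Polynomial.C a) (primal M)

/-- A generic motion polynomial: monic, a motion polynomial, with `mrpf` of the primal
part equal to `1`. -/
def GenericD (M : DHq[X]) : Prop :=
  M.Monic ∧ IsMotion M ∧ ReducedQ (primal M)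

/-- The monic linear dual quaternion polynomial `t - p - ε d`. -/
def lin (p d : Hq) : DHq[X] := mp (Polynomial.X - Polynomial.C p) (-Polynomial.C d)

/-- `M` admits a factorization into monic linear motion polynomial factors. -/
def HasLinFact (M : DHq[X]) : Prop :=
  ∃ L : List DHq, (∀ h ∈ L, IsMotion (Polynomial.X - Polynomial.C h)) ∧
    M = (L.map fun h => Polynomial.X - Polynomial.C h).prod

end

/-!
For two factors `cᵢQᵢ + εDᵢ` with coprime norms, the product `cQ + εD` satisfies
`Q*D = c₁ν(Q₁)·Q₂*D₂ + c₂·Q₂*(Q₁*D₁)Q₂`. If a real `f` divides `c₁`, the first summand vanishes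
modulo `f`, while `c₂` and `ν(Q₂) = Q₂Q₂*` are invertible modulo `f`; hence `f ∣ Q*D` iff
`f ∣ Q₁*D₁`. The case `f ∣ c₂` and the product `DQ*` are symmetric. Moreover `Q₁Q₂` is again
reduced, so `c` and `Q` are `∏ cᵢ` and `∏ Qᵢ` up to real units. By induction on the number of
factors, each `gᵢ` is the gcd of `g` with `cᵢ`, and the `cᵢ` are pairwise coprime with product
associated to `c`.
-/

section Divisibility

variable {ι R A : Type*}

lemma dvd_prod_of_forall_dvd [CommMonoid R] [DecompositionMonoid R] {s : Finset ι} {a b : ι → R}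
    {x : R} (hx : x ∣ ∏ i ∈ s, a i) (hab : ∀ i ∈ s, ∀ y, y ∣ a i → y ∣ x → y ∣ b i) :
    x ∣ ∏ i ∈ s, b i := by
  classical
  induction s using Finset.induction_on generalizing x with
  | empty => simpa only [Finset.prod_empty] using hx
  | insert i s hi ih =>
    rw [Finset.prod_insert hi] at hx ⊢
    obtain ⟨y, z, hy, hz, rfl⟩ := exists_dvd_and_dvd_of_dvd_mul hx
    exact mul_dvd_mul (hab i (Finset.mem_insert_self i s) y hy (dvd_mul_right y z))
      (ih hz fun j hj w hw hwz => hab j (Finset.mem_insert_of_mem hj) w hw (hwz.mul_left y))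

lemma isCoprime_list_prod_right [CommSemiring R] {x : R} {l : List R}
    (h : ∀ y ∈ l, IsCoprime x y) : IsCoprime x l.prod :=
  l.prod_induction (IsCoprime x) (fun _ _ => IsCoprime.mul_right) isCoprime_one_right h

lemma associated_prod_of_pairwise_isCoprime [CommRing R] [IsDomain R] [DecompositionMonoid R]
    [Fintype ι] {g : R} {c gs : ι → R} (hg : g ∣ ∏ i, c i)
    (hc : Pairwise (Function.onFun IsCoprime c)) (hgs : ∀ i f, f ∣ gs i ↔ f ∣ c i ∧ f ∣ g) :
    Associated g (∏ i, gs i) := by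
  refine associated_of_dvd_dvd
    (dvd_prod_of_forall_dvd hg fun i _ y hy hyg => (hgs i y).2 ⟨hy, hyg⟩)
    (Fintype.prod_dvd_of_coprime (fun i j hij => ?_) fun i => ((hgs i _).1 dvd_rfl).2)
  exact (hc hij).mono ((hgs i _).1 dvd_rfl).1 ((hgs j _).1 dvd_rfl).1

lemma dvd_iff_of_greatest_monic {K : Type*} [Field K] {c g : K[X]} {S : K[X] → Prop} (hc : c ≠ 0)
    (hS : ∀ f h, f ∣ h → S h → S f) (hgc : g ∣ c) (hSg : S g)
    (hmax : ∀ f : K[X], f.Monic → f ∣ c → S f → f ∣ g) (f : K[X]) : f ∣ g ↔ f ∣ c ∧ S f := by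
  classical
  refine ⟨fun hf => ⟨hf.trans hgc, hS f g hf hSg⟩, fun ⟨hfc, hSf⟩ => ?_⟩
  exact normalize_dvd_iff.1 <| hmax _ (monic_normalize (ne_zero_of_dvd_ne_zero hc hfc))
    (normalize_dvd_iff.2 hfc) (hS _ f (normalize_dvd_iff.2 dvd_rfl) hSf)

variable [CommRing R] [Ring A] [Algebra R A]

lemma algebraMap_dvd_mul_of_dvd {f : R} {a : A} (h : algebraMap R A f ∣ a) (b : A) :
    algebraMap R A f ∣ b * a := by
  obtain ⟨d, rfl⟩ := h
  exact ⟨b * d, Algebra.left_comm b f d⟩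

lemma algebraMap_dvd_mul_left_iff {f m : R} {x y : A} (hyx : y * x = algebraMap R A m)
    (hm : IsCoprime f m) (a : A) : algebraMap R A f ∣ x * a ↔ algebraMap R A f ∣ a := by
  refine ⟨fun h => ?_, fun h => algebraMap_dvd_mul_of_dvd h x⟩
  obtain ⟨u, v, huv⟩ := hm
  have ha : algebraMap R A f * (algebraMap R A u * a) + algebraMap R A v * y * (x * a) = a := by
    rw [mul_assoc, ← mul_assoc y, hyx, ← mul_assoc, ← mul_assoc, ← map_mul, ← map_mul, ← add_mul,
      ← map_add, mul_comm f u, huv, map_one, one_mul]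
  exact ha ▸ dvd_add (dvd_mul_right _ _) (algebraMap_dvd_mul_of_dvd h _)

lemma algebraMap_dvd_mul_right_iff {f m : R} {x y : A} (hxy : x * y = algebraMap R A m)
    (hm : IsCoprime f m) (a : A) : algebraMap R A f ∣ a * x ↔ algebraMap R A f ∣ a := by
  refine ⟨fun h => ?_, fun h => h.mul_right x⟩
  have hma : algebraMap R A f ∣ algebraMap R A m * a := by
    rw [Algebra.commutes, ← hxy, ← mul_assoc]
    exact h.mul_right y
  have hone : 1 * algebraMap R A m = algebraMap R A m := one_mul _
  exact (algebraMap_dvd_mul_left_iff hone hm a).1 hma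

end Divisibility

section Conjugation

lemma fst_star (x : DHq) : (star x).fst = star x.fst := by
  change (inl (star x.fst) + inr (star x.snd) : DHq).fst = _
  simp

lemma snd_star (x : DHq) : (star x).snd = star x.snd := by
  change (inl (star x.fst) + inr (star x.snd) : DHq).snd = _
  simp

noncomputable instance : StarAddMonoid DHq where
  star_involutive x := by ext1 <;> simp only [fst_star, snd_star, star_star]
  star_add x y := by ext1 <;> simp only [fst_star, snd_star, fst_add, snd_add, star_add]

variable {R : Type*} [Semiring R]

lemma coeff_cstar [StarAddMonoid R] (A : R[X]) (n : ℕ) :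
    (cstar A).coeff n = star (A.coeff n) := by
  simp only [cstar, sum_def, finsetSum_coeff, coeff_C_mul_X_pow, Finset.sum_ite_eq, mem_support_iff]
  split_ifs with h
  · rfl
  · rw [notMem_support_iff.1 h, star_zero]

lemma cstar_cstar [StarAddMonoid R] (A : R[X]) : cstar (cstar A) = A := by
  ext1 n
  rw [coeff_cstar, coeff_cstar, star_star]

lemma cstar_mul [StarRing R] (A B : R[X]) : cstar (A * B) = cstar B * cstar A := by
  ext1 n
  simp only [coeff_cstar, coeff_mul, star_sum, star_mul]
  rw [← Finset.Nat.sum_antidiagonal_swap]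
  rfl

lemma cstar_one [StarRing R] : cstar (1 : R[X]) = 1 := by
  ext1 n
  rw [coeff_cstar, coeff_one, apply_ite star, star_one, star_zero]

lemma primal_cstar (A : DHq[X]) : primal (cstar A) = cstar (primal A) := by
  ext1 n
  simp only [primal, coeff_map, coeff_cstar]
  exact fst_star _

end Conjugation

section DualParts

lemma coeff_mp (P D : Hq[X]) (n : ℕ) : (mp P D).coeff n = inl (P.coeff n) + inr (D.coeff n) := by
  simp only [mp, dhQ, coeff_add, coeff_C_mul, coeff_map]
  congr 1
  exact (inr_mul_inl _ _).trans (congrArg inr (one_mul (D.coeff n)))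

lemma primal_mp (P D : Hq[X]) : primal (mp P D) = P := by
  ext1 n
  simp [primal, coeff_mp]

lemma primal_dPoly (f : ℝ[X]) : primal (dPoly f) = qPoly f := by
  ext1 n
  simp [primal, dPoly, dhQ]

lemma mp_inj {P D P' D' : Hq[X]} : mp P D = mp P' D' ↔ P = P' ∧ D = D' := by
  refine ⟨fun h => ⟨?_, ?_⟩, fun ⟨hP, hD⟩ => hP ▸ hD ▸ rfl⟩ <;> ext1 n
  · simpa [coeff_mp] using congrArg (fun A : DHq[X] => (A.coeff n).fst) h
  · simpa [coeff_mp] using congrArg (fun A : DHq[X] => (A.coeff n).snd) h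

lemma mp_one_zero : mp 1 0 = 1 := by
  simp [mp, dhQ]

lemma mp_mul_mp (P D P' D' : Hq[X]) : mp P D * mp P' D' = mp (P * P') (P * D' + D * P') := by
  ext n : 2 <;> simp [coeff_mul, coeff_mp, fst_sum, snd_sum, Finset.sum_add_distrib]

end DualParts

section NormPolynomial

attribute [local instance] Polynomial.algebra

lemma qPoly_mul (f g : ℝ[X]) : qPoly (f * g) = qPoly f * qPoly g := Polynomial.map_mul _

lemma qPoly_one : qPoly 1 = 1 := Polynomial.map_one _

lemma qPoly_injective : Function.Injective qPoly := map_injective _ (algebraMap ℝ Hq).injective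

lemma qPoly_eq_zero_iff {f : ℝ[X]} : qPoly f = 0 ↔ f = 0 :=
  map_eq_zero_iff (algebraMap ℝ[X] Hq[X]) qPoly_injective

lemma qPoly_mul_comm (f : ℝ[X]) (A : Hq[X]) : qPoly f * A = A * qPoly f :=
  Algebra.commutes f A

lemma mul_qPoly_mul (A : Hq[X]) (f : ℝ[X]) (B : Hq[X]) : A * (qPoly f * B) = qPoly f * (A * B) :=
  Algebra.left_comm A f B

lemma qPoly_dvd_qPoly {f g : ℝ[X]} (h : f ∣ g) : qPoly f ∣ qPoly g :=
  map_dvd (algebraMap ℝ[X] Hq[X]) h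

lemma qPoly_dvd_qPoly_mul_iff {f m : ℝ[X]} (hm : IsCoprime f m) (A : Hq[X]) :
    qPoly f ∣ qPoly m * A ↔ qPoly f ∣ A :=
  algebraMap_dvd_mul_left_iff (one_mul (qPoly m)) hm A

lemma cstar_qPoly (f : ℝ[X]) : cstar (qPoly f) = qPoly f := by
  ext1 n
  simp [coeff_cstar, qPoly]

lemma exists_mul_cstar_eq_qPoly (A : Hq[X]) : ∃ N : ℝ[X], A * cstar A = qPoly N := by
  have hself : cstar (A * cstar A) = A * cstar A := by rw [cstar_mul, cstar_cstar]
  have hlift : A * cstar A ∈ lifts (algebraMap ℝ Hq) := by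
    refine (lifts_iff_coeff_lifts _).2 fun n => ⟨((A * cstar A).coeff n).re, Eq.symm ?_⟩
    rw [Quaternion.algebraMap_def, ← Quaternion.star_eq_self, ← coeff_cstar, hself]
  obtain ⟨N, hN⟩ := (mem_lifts _).1 hlift
  exact ⟨N, hN.symm⟩

lemma mul_cstar_mul {A B : Hq[X]} {M N : ℝ[X]} (hA : A * cstar A = qPoly M)
    (hB : B * cstar B = qPoly N) : A * B * cstar (A * B) = qPoly (M * N) := by
  rw [cstar_mul, mul_assoc, ← mul_assoc B, hB, mul_qPoly_mul, hA, ← qPoly_mul, mul_comm]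

/-- The norm polynomial `ν(A) = A·A*` of `A ∈ ℍ[t]`, as a multiplicative map into `ℝ[t]`. -/
noncomputable def normPoly : Hq[X] →* ℝ[X] where
  toFun A := (exists_mul_cstar_eq_qPoly A).choose
  map_one' := qPoly_injective <| by
    rw [← (exists_mul_cstar_eq_qPoly 1).choose_spec, cstar_one, one_mul, qPoly_one]
  map_mul' A B := qPoly_injective <| by
    rw [← (exists_mul_cstar_eq_qPoly (A * B)).choose_spec]
    exact mul_cstar_mul (exists_mul_cstar_eq_qPoly A).choose_spec
      (exists_mul_cstar_eq_qPoly B).choose_spec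

lemma mul_cstar_self (A : Hq[X]) : A * cstar A = qPoly (normPoly A) :=
  (exists_mul_cstar_eq_qPoly A).choose_spec

lemma cstar_mul_self (A : Hq[X]) : cstar A * A = qPoly (normPoly A) := by
  rcases eq_or_ne A 0 with rfl | hA
  · rw [← mul_cstar_self, mul_zero, zero_mul]
  · refine mul_left_cancel₀ hA ?_
    rw [← mul_assoc, mul_cstar_self, qPoly_mul_comm]

lemma normPoly_qPoly (f : ℝ[X]) : normPoly (qPoly f) = f ^ 2 := qPoly_injective <| by
  rw [← mul_cstar_self, cstar_qPoly, sq, qPoly_mul]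

lemma normPoly_primal_of_mul_cstar {A : DHq[X]} {N : ℝ[X]} (h : A * cstar A = dPoly N) :
    normPoly (primal A) = N := qPoly_injective <| by
  rw [← mul_cstar_self, ← primal_cstar, ← primal_dPoly, ← h]
  exact (Polynomial.map_mul _).symm

end NormPolynomial

section Reduced

attribute [local instance] Polynomial.algebra

lemma ReducedQ.ne_zero {A : Hq[X]} (hA : ReducedQ A) : A ≠ 0 := by
  rintro rfl
  exact not_isUnit_X (hA X monic_X (dvd_zero _) ▸ isUnit_one)

lemma ReducedQ.isUnit_of_dvd {A : Hq[X]} (hA : ReducedQ A) {f : ℝ[X]} (hf : qPoly f ∣ A) :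
    IsUnit f := by
  classical
  have hf0 : f ≠ 0 := by
    rintro rfl
    exact hA.ne_zero (zero_dvd_iff.1 (qPoly_eq_zero_iff.2 rfl ▸ hf))
  rw [← (normalize_associated f).isUnit_iff,
    hA _ (monic_normalize hf0) ((qPoly_dvd_qPoly (normalize_dvd_iff.2 dvd_rfl)).trans hf)]
  exact isUnit_one

lemma reducedQ_one : ReducedQ 1 := by
  rintro f hf ⟨B, hB⟩
  have hunit : f * (f * normPoly B) = 1 := by
    rw [← mul_assoc, ← sq, ← normPoly_qPoly, ← map_mul, ← hB, map_one]
  exact hf.eq_one_of_isUnit (IsUnit.of_mul_eq_one _ hunit)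

lemma ReducedQ.mul {A B : Hq[X]} (hA : ReducedQ A) (hB : ReducedQ B)
    (hAB : IsCoprime (normPoly A) (normPoly B)) : ReducedQ (A * B) := by
  intro f hfm hf
  have hcop : IsCoprime f (normPoly A) := by
    refine isCoprime_of_dvd _ _ (fun h => hfm.ne_zero h.1) fun p hp _ hpf hpA => hp ?_
    have hpB : IsCoprime p (normPoly B) := hAB.mono hpA dvd_rfl
    exact hA.isUnit_of_dvd <| (algebraMap_dvd_mul_right_iff (mul_cstar_self B) hpB A).1 <|
      (qPoly_dvd_qPoly hpf).trans hf
  exact hB f hfm ((algebraMap_dvd_mul_left_iff (cstar_mul_self A) hcop B).1 hf)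

lemma reducedQ_list_prod {l : List Hq[X]} (hl : ∀ Q ∈ l, ReducedQ Q)
    (hcop : l.Pairwise (Function.onFun IsCoprime normPoly)) : ReducedQ l.prod := by
  induction l with
  | nil => exact reducedQ_one
  | cons Q l ih =>
    rw [List.pairwise_cons] at hcop
    rw [List.forall_mem_cons] at hl
    rw [List.prod_cons]
    refine hl.1.mul (ih hl.2 hcop.2) ?_
    rw [map_list_prod]
    exact isCoprime_list_prod_right (List.forall_mem_map.2 hcop.1)

lemma ReducedQ.qPoly_dvd_mul_iff {B : Hq[X]} (hB : ReducedQ B) {a b : ℝ[X]} :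
    qPoly a ∣ qPoly b * B ↔ a ∣ b := by
  refine ⟨fun h => ?_, fun h => (qPoly_dvd_qPoly h).mul_right B⟩
  rcases eq_or_ne a 0 with rfl | ha
  · rw [qPoly_eq_zero_iff.2 rfl, zero_dvd_iff, mul_eq_zero, qPoly_eq_zero_iff,
      or_iff_left hB.ne_zero] at h
    exact h ▸ dvd_rfl
  obtain ⟨a, b, d, hab, rfl, rfl⟩ := UniqueFactorizationMonoid.exists_reduced_factors a ha b
  rw [qPoly_mul, qPoly_mul, mul_assoc,
    mul_dvd_mul_iff_left (qPoly_eq_zero_iff.not.2 (left_ne_zero_of_mul ha))] at h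
  have haB : qPoly a ∣ B := (qPoly_dvd_qPoly_mul_iff hab.isCoprime B).1 h
  exact mul_dvd_mul_left d (hB.isUnit_of_dvd haB).dvd

lemma exists_unit_of_qPoly_mul_eq {c c' : ℝ[X]} {Q Q' : Hq[X]} (hc' : c' ≠ 0) (hQ : ReducedQ Q)
    (hQ' : ReducedQ Q') (h : qPoly c * Q = qPoly c' * Q') :
    ∃ u : ℝ[X]ˣ, c * u = c' ∧ Q = qPoly u * Q' := by
  obtain ⟨u, rfl⟩ : Associated c c' := associated_of_dvd_dvd
    (hQ'.qPoly_dvd_mul_iff.1 (h ▸ dvd_mul_right _ _))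
    (hQ.qPoly_dvd_mul_iff.1 (h ▸ dvd_mul_right _ _))
  refine ⟨u, rfl, mul_left_cancel₀ (qPoly_eq_zero_iff.not.2 (left_ne_zero_of_mul hc')) ?_⟩
  rw [h, qPoly_mul, mul_assoc]

end Reduced

section CoprimeProduct

attribute [local instance] Polynomial.algebra

section TwoFactors

variable {c₁ c₂ f : ℝ[X]} {Q₁ Q₂ : Hq[X]} (D₁ D₂ : Hq[X])

lemma cstar_mul_mul_dualPart :
    cstar (Q₁ * Q₂) * (qPoly c₁ * Q₁ * D₂ + D₁ * (qPoly c₂ * Q₂)) =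
      qPoly c₁ * (qPoly (normPoly Q₁) * (cstar Q₂ * D₂)) +
        qPoly c₂ * (cstar Q₂ * (cstar Q₁ * D₁ * Q₂)) := by
  have hfst : cstar Q₂ * cstar Q₁ * (qPoly c₁ * Q₁ * D₂) =
      qPoly c₁ * (qPoly (normPoly Q₁) * (cstar Q₂ * D₂)) := by
    rw [mul_assoc (qPoly c₁), mul_qPoly_mul, mul_assoc, ← mul_assoc (cstar Q₁), cstar_mul_self,
      mul_qPoly_mul]
  have hsnd : cstar Q₂ * cstar Q₁ * (D₁ * (qPoly c₂ * Q₂)) =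
      qPoly c₂ * (cstar Q₂ * (cstar Q₁ * D₁ * Q₂)) := by
    rw [mul_qPoly_mul, mul_qPoly_mul, mul_assoc, mul_assoc (cstar Q₁)]
  rw [cstar_mul, mul_add, hfst, hsnd]

lemma dualPart_mul_cstar_mul :
    (qPoly c₁ * Q₁ * D₂ + D₁ * (qPoly c₂ * Q₂)) * cstar (Q₁ * Q₂) =
      qPoly c₁ * (Q₁ * (D₂ * cstar Q₂ * cstar Q₁)) +
        qPoly c₂ * (qPoly (normPoly Q₂) * (D₁ * cstar Q₁)) := by
  have hfst : qPoly c₁ * Q₁ * D₂ * (cstar Q₂ * cstar Q₁) =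
      qPoly c₁ * (Q₁ * (D₂ * cstar Q₂ * cstar Q₁)) := by
    simp only [mul_assoc]
  have hsnd : D₁ * (qPoly c₂ * Q₂) * (cstar Q₂ * cstar Q₁) =
      qPoly c₂ * (qPoly (normPoly Q₂) * (D₁ * cstar Q₁)) := by
    rw [mul_qPoly_mul, mul_assoc (qPoly c₂), mul_assoc D₁, ← mul_assoc Q₂, mul_cstar_self,
      mul_qPoly_mul]
  rw [cstar_mul, add_mul, hfst, hsnd]

lemma qPoly_dvd_dualPart_iff_left (hf : f ∣ c₁)
    (h : IsCoprime (c₁ * normPoly Q₁) (c₂ * normPoly Q₂)) :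
    (qPoly f ∣ cstar (Q₁ * Q₂) * (qPoly c₁ * Q₁ * D₂ + D₁ * (qPoly c₂ * Q₂)) ↔
      qPoly f ∣ cstar Q₁ * D₁) ∧
    (qPoly f ∣ (qPoly c₁ * Q₁ * D₂ + D₁ * (qPoly c₂ * Q₂)) * cstar (Q₁ * Q₂) ↔
      qPoly f ∣ D₁ * cstar Q₁) := by
  have hfc : IsCoprime f c₂ := h.mono (hf.mul_right _) (dvd_mul_right _ _)
  have hfQ : IsCoprime f (normPoly Q₂) := h.mono (hf.mul_right _) (dvd_mul_left _ _)
  have hvanish (A : Hq[X]) : qPoly f ∣ qPoly c₁ * A := (qPoly_dvd_qPoly hf).mul_right A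
  rw [cstar_mul_mul_dualPart, dualPart_mul_cstar_mul, dvd_add_right (hvanish _),
    dvd_add_right (hvanish _), qPoly_dvd_qPoly_mul_iff hfc, qPoly_dvd_qPoly_mul_iff hfc,
    qPoly_dvd_qPoly_mul_iff hfQ]
  exact ⟨(algebraMap_dvd_mul_left_iff (mul_cstar_self Q₂) hfQ _).trans
    (algebraMap_dvd_mul_right_iff (mul_cstar_self Q₂) hfQ _), Iff.rfl⟩

lemma qPoly_dvd_dualPart_iff_right (hf : f ∣ c₂)
    (h : IsCoprime (c₁ * normPoly Q₁) (c₂ * normPoly Q₂)) :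
    (qPoly f ∣ cstar (Q₁ * Q₂) * (qPoly c₁ * Q₁ * D₂ + D₁ * (qPoly c₂ * Q₂)) ↔
      qPoly f ∣ cstar Q₂ * D₂) ∧
    (qPoly f ∣ (qPoly c₁ * Q₁ * D₂ + D₁ * (qPoly c₂ * Q₂)) * cstar (Q₁ * Q₂) ↔
      qPoly f ∣ D₂ * cstar Q₂) := by
  have hfc : IsCoprime f c₁ := h.symm.mono (hf.mul_right _) (dvd_mul_right _ _)
  have hfQ : IsCoprime f (normPoly Q₁) := h.symm.mono (hf.mul_right _) (dvd_mul_left _ _)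
  have hvanish (A : Hq[X]) : qPoly f ∣ qPoly c₂ * A := (qPoly_dvd_qPoly hf).mul_right A
  rw [cstar_mul_mul_dualPart, dualPart_mul_cstar_mul, dvd_add_left (hvanish _),
    dvd_add_left (hvanish _), qPoly_dvd_qPoly_mul_iff hfc, qPoly_dvd_qPoly_mul_iff hfc,
    qPoly_dvd_qPoly_mul_iff hfQ]
  exact ⟨Iff.rfl, (algebraMap_dvd_mul_left_iff (cstar_mul_self Q₁) hfQ _).trans
    (algebraMap_dvd_mul_right_iff (cstar_mul_self Q₁) hfQ _)⟩

end TwoFactors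

lemma mp_mul_mp_qPoly (c₁ c₂ : ℝ[X]) (Q₁ Q₂ D₁ D₂ : Hq[X]) :
    mp (qPoly c₁ * Q₁) D₁ * mp (qPoly c₂ * Q₂) D₂ =
      mp (qPoly (c₁ * c₂) * (Q₁ * Q₂)) (qPoly c₁ * Q₁ * D₂ + D₁ * (qPoly c₂ * Q₂)) := by
  rw [mp_mul_mp, mul_assoc (qPoly c₁), mul_qPoly_mul Q₁, ← mul_assoc, ← qPoly_mul]

lemma exists_dualPart_list_prod {ι : Type*} (l : List ι) (cs : ι → ℝ[X]) (Qs Ds : ι → Hq[X])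
    (hcop : l.Pairwise (Function.onFun IsCoprime fun i => cs i * normPoly (Qs i))) :
    ∃ D : Hq[X],
      (l.map fun i => mp (qPoly (cs i) * Qs i) (Ds i)).prod =
        mp (qPoly (l.map cs).prod * (l.map Qs).prod) D ∧
      ∀ i ∈ l, ∀ f, f ∣ cs i →
        (qPoly f ∣ cstar (l.map Qs).prod * D ↔ qPoly f ∣ cstar (Qs i) * Ds i) ∧
        (qPoly f ∣ D * cstar (l.map Qs).prod ↔ qPoly f ∣ Ds i * cstar (Qs i)) := by
  induction l with
  | nil => exact ⟨0, by simp [qPoly_one, mp_one_zero], by simp⟩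
  | cons a l ih =>
    rw [List.pairwise_cons] at hcop
    obtain ⟨D, hD, hl⟩ := ih hcop.2
    have hal : IsCoprime (cs a * normPoly (Qs a))
        ((l.map cs).prod * normPoly (l.map Qs).prod) := by
      rw [map_list_prod, List.map_map, ← List.prod_map_mul]
      exact isCoprime_list_prod_right (List.forall_mem_map.2 hcop.1)
    refine ⟨qPoly (cs a) * Qs a * D + Ds a * (qPoly (l.map cs).prod * (l.map Qs).prod), ?_, ?_⟩
    · simp only [List.map_cons, List.prod_cons, hD, mp_mul_mp_qPoly]
    · simp only [List.map_cons, List.prod_cons, List.forall_mem_cons]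
      refine ⟨fun f hf => qPoly_dvd_dualPart_iff_left _ _ hf hal, fun i hi f hf => ?_⟩
      have hfl : f ∣ (l.map cs).prod := hf.trans (List.dvd_prod (List.mem_map_of_mem hi))
      have htail := qPoly_dvd_dualPart_iff_right (Ds a) D hfl hal
      exact ⟨htail.1.trans (hl i hi f hf).1, htail.2.trans (hl i hi f hf).2⟩

lemma associated_prod_and_dvd_dualPart_iff {c : ℝ[X]} {Q D : Hq[X]} (hQ : ReducedQ Q)
    {r : ℕ} {cs N : Fin r → ℝ[X]} {Qs Ds : Fin r → Hq[X]} (hQs : ∀ i, ReducedQ (Qs i))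
    (hprod : mp (qPoly c * Q) D = (List.ofFn fun i => mp (qPoly (cs i) * Qs i) (Ds i)).prod)
    (hN : ∀ i, N i ≠ 0) (hcop : Pairwise (Function.onFun IsCoprime N))
    (hnorm : ∀ i, mp (qPoly (cs i) * Qs i) (Ds i) *
      cstar (mp (qPoly (cs i) * Qs i) (Ds i)) = dPoly (N i)) :
    c ≠ 0 ∧ Associated c (∏ i, cs i) ∧ Pairwise (Function.onFun IsCoprime cs) ∧
      ∀ i f, f ∣ cs i →
        (qPoly f ∣ cstar Q * D ↔ qPoly f ∣ cstar (Qs i) * Ds i) ∧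
        (qPoly f ∣ D * cstar Q ↔ qPoly f ∣ Ds i * cstar (Qs i)) := by
  have hNi (i : Fin r) : N i = cs i * (cs i * normPoly (Qs i)) := by
    rw [← normPoly_primal_of_mul_cstar (hnorm i), primal_mp, map_mul, normPoly_qPoly, sq, mul_assoc]
  have hcQ : Pairwise (Function.onFun IsCoprime fun i => cs i * normPoly (Qs i)) :=
    fun i j hij => (hcop hij).mono (hNi i ▸ dvd_mul_left _ _) (hNi j ▸ dvd_mul_left _ _)
  obtain ⟨D', hD', hdvd⟩ := exists_dualPart_list_prod (List.finRange r) cs Qs Ds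
    ((List.nodup_finRange r).pairwise_of_forall_ne fun i _ j _ hij => hcQ hij)
  rw [List.ofFn_eq_map, hD', mp_inj] at hprod
  obtain ⟨hP, rfl⟩ := hprod
  have hR : ReducedQ ((List.finRange r).map Qs).prod := by
    refine reducedQ_list_prod (List.forall_mem_map.2 fun i _ => hQs i) (List.pairwise_map.2 ?_)
    exact (List.nodup_finRange r).pairwise_of_forall_ne fun i _ j _ hij =>
      (hcQ hij).mono (dvd_mul_left _ _) (dvd_mul_left _ _)
  have hcs : ((List.finRange r).map cs).prod = ∏ i, cs i := by
    rw [← List.ofFn_eq_map, List.prod_ofFn]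
  have hcs0 : ((List.finRange r).map cs).prod ≠ 0 :=
    hcs ▸ Finset.prod_ne_zero_iff.2 fun i _ => left_ne_zero_of_mul (hNi i ▸ hN i)
  obtain ⟨u, hu, rfl⟩ := exists_unit_of_qPoly_mul_eq hcs0 hQ hR hP
  refine ⟨left_ne_zero_of_mul (hu ▸ hcs0), ⟨u, hu.trans hcs⟩,
    fun i j hij => (hcQ hij).mono (dvd_mul_right _ _) (dvd_mul_right _ _), fun i f hf => ?_⟩
  have hfu : IsCoprime f u := isCoprime_one_right.mono dvd_rfl u.isUnit.dvd
  rw [cstar_mul, cstar_qPoly, ← qPoly_mul_comm, mul_assoc, mul_qPoly_mul,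
    qPoly_dvd_qPoly_mul_iff hfu, qPoly_dvd_qPoly_mul_iff hfu]
  exact hdvd i (List.mem_finRange i) f hf

end CoprimeProduct

section GreatestMonicDivisors

lemma IsMrpf2.dvd_iff {g c : ℝ[X]} {A : Hq[X]} (h : IsMrpf2 g c A) (hc : c ≠ 0) (f : ℝ[X]) :
    f ∣ g ↔ f ∣ c ∧ qPoly f ∣ A := by
  obtain ⟨-, hgc, hgA, hmax⟩ := h
  exact dvd_iff_of_greatest_monic hc (fun _ _ hfg => (qPoly_dvd_qPoly hfg).trans) hgc hgA hmax f

lemma IsMrpf3.dvd_iff {g c : ℝ[X]} {A B : Hq[X]} (h : IsMrpf3 g c A B) (hc : c ≠ 0) (f : ℝ[X]) :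
    f ∣ g ↔ f ∣ c ∧ qPoly f ∣ A ∧ qPoly f ∣ B := by
  obtain ⟨-, hgc, hgA, hgB, hmax⟩ := h
  exact dvd_iff_of_greatest_monic hc
    (fun _ _ hfg => And.imp (qPoly_dvd_qPoly hfg).trans (qPoly_dvd_qPoly hfg).trans) hgc ⟨hgA, hgB⟩
    (fun f hf hfc hfAB => hmax f hf hfc hfAB.1 hfAB.2) f

lemma eq_prod_of_dvd_iff {K ι : Type*} [Field K] [Fintype ι] {c g : K[X]} {cs gs : ι → K[X]}
    {S : K[X] → Prop} {Ss : ι → K[X] → Prop} (hc : Associated c (∏ i, cs i))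
    (hcs : Pairwise (Function.onFun IsCoprime cs)) (hS : ∀ i f, f ∣ cs i → (S f ↔ Ss i f))
    (hgm : g.Monic) (hgsm : ∀ i, (gs i).Monic) (hg : ∀ f, f ∣ g ↔ f ∣ c ∧ S f)
    (hgs : ∀ i f, f ∣ gs i ↔ f ∣ cs i ∧ Ss i f) : g = ∏ i, gs i := by
  refine eq_of_monic_of_associated hgm (monic_prod_of_monic _ _ fun i _ => hgsm i)
    (associated_prod_of_pairwise_isCoprime (((hg g).1 dvd_rfl).1.trans hc.dvd) hcs fun i f => ?_)
  rw [hgs, hg]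
  refine and_congr_right fun hf => ?_
  have hfc : f ∣ c := (hf.trans (Finset.dvd_prod_of_mem cs (Finset.mem_univ i))).trans hc.dvd'
  rw [hS i f hf, and_iff_right hfc]

end GreatestMonicDivisors

theorem gcd_multiplicativity_general
    (c : ℝ[X]) (Q D : Hq[X]) (hQ : ReducedQ Q)
    (r : ℕ) (cs N : Fin r → ℝ[X]) (Qs Ds : Fin r → Hq[X])
    (hprod : mp (qPoly c * Q) D = (List.ofFn fun i => mp (qPoly (cs i) * Qs i) (Ds i)).prod)
    (hQs : ∀ i, ReducedQ (Qs i)) (hN : ∀ i, N i ≠ 0)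
    (hcop : Pairwise (Function.onFun IsCoprime N))
    (hnorm : ∀ i, mp (qPoly (cs i) * Qs i) (Ds i) *
      cstar (mp (qPoly (cs i) * Qs i) (Ds i)) = dPoly (N i))
    (gLs gRs gs : Fin r → ℝ[X]) (gL gR g : ℝ[X])
    (hgLs : ∀ i, IsMrpf2 (gLs i) (cs i) (cstar (Qs i) * Ds i))
    (hgRs : ∀ i, IsMrpf2 (gRs i) (cs i) (Ds i * cstar (Qs i)))
    (hgs : ∀ i, IsMrpf3 (gs i) (cs i) (Ds i * cstar (Qs i)) (cstar (Qs i) * Ds i))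
    (hgL : IsMrpf2 gL c (cstar Q * D))
    (hgR : IsMrpf2 gR c (D * cstar Q))
    (hg : IsMrpf3 g c (D * cstar Q) (cstar Q * D)) :
    gL = ∏ i, gLs i ∧ gR = ∏ i, gRs i ∧ g = ∏ i, gs i := by
  obtain ⟨hc0, hc, hcs, hdvd⟩ := associated_prod_and_dvd_dualPart_iff hQ hQs hprod hN hcop hnorm
  have hcs0 (i : Fin r) : cs i ≠ 0 :=
    Finset.prod_ne_zero_iff.1 (hc.ne_zero_iff.1 hc0) i (Finset.mem_univ i)
  refine ⟨?_, ?_, ?_⟩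
  · exact eq_prod_of_dvd_iff hc hcs (fun i f hf => (hdvd i f hf).1) hgL.1 (fun i => (hgLs i).1)
      (hgL.dvd_iff hc0) fun i => (hgLs i).dvd_iff (hcs0 i)
  · exact eq_prod_of_dvd_iff hc hcs (fun i f hf => (hdvd i f hf).2) hgR.1 (fun i => (hgRs i).1)
      (hgR.dvd_iff hc0) fun i => (hgRs i).dvd_iff (hcs0 i)
  · exact eq_prod_of_dvd_iff hc hcs (fun i f hf => and_congr (hdvd i f hf).2 (hdvd i f hf).1) hg.1
      (fun i => (hgs i).1) (hg.dvd_iff hc0) fun i => (hgs i).dvd_iff (hcs0 i)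

/-- Multiplicativity of the real gcds `g_L`, `g_R`, `g` along a primary-norm
decomposition. -/
theorem gcd_multiplicativity
    (c : ℝ[X]) (Q D : Hq[X]) (M : DHq[X])
    (hM : M = mp (qPoly c * Q) D)
    (hmonic : M.Monic) (hmotion : IsMotion M)
    (hred : ReducedD M) (hbdd : BoundedD M) (hQred : ReducedQ Q)
    (r : ℕ) (cs : Fin r → ℝ[X]) (Qs Ds : Fin r → Hq[X])
    (Ns : Fin r → ℝ[X]) (ns : Fin r → ℕ)
    (hprod : M = (List.ofFn fun i => mp (qPoly (cs i) * Qs i) (Ds i)).prod)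
    (hMi : ∀ i, (mp (qPoly (cs i) * Qs i) (Ds i)).Monic ∧
      IsMotion (mp (qPoly (cs i) * Qs i) (Ds i)))
    (hQi : ∀ i, ReducedQ (Qs i))
    (hNs : ∀ i, Irreducible (Ns i) ∧ (Ns i).natDegree = 2)
    (hcopN : ∀ i j, i ≠ j → IsCoprime (Ns i) (Ns j))
    (hns : ∀ i, 0 < ns i)
    (hnormi : ∀ i, mp (qPoly (cs i) * Qs i) (Ds i) *
      cstar (mp (qPoly (cs i) * Qs i) (Ds i)) = dPoly (Ns i ^ ns i))
    (gLs gRs gs : Fin r → ℝ[X]) (gL gR g : ℝ[X])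
    (hgLs : ∀ i, IsMrpf2 (gLs i) (cs i) (cstar (Qs i) * Ds i))
    (hgRs : ∀ i, IsMrpf2 (gRs i) (cs i) (Ds i * cstar (Qs i)))
    (hgs : ∀ i, IsMrpf3 (gs i) (cs i) (Ds i * cstar (Qs i)) (cstar (Qs i) * Ds i))
    (hgL : IsMrpf2 gL c (cstar Q * D))
    (hgR : IsMrpf2 gR c (D * cstar Q))
    (hg : IsMrpf3 g c (D * cstar Q) (cstar Q * D)) :
    gL = ∏ i, gLs i ∧ gR = ∏ i, gRs i ∧ g = ∏ i, gs i := by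
  exact gcd_multiplicativity_general c Q D hQred r cs (fun i => Ns i ^ ns i) Qs Ds (hM ▸ hprod) hQi
    (fun i => pow_ne_zero _ (hNs i).1.ne_zero) (fun i j hij => (hcopN i j hij).pow) hnormi
    gLs gRs gs gL gR g hgLs hgRs hgs hgL hgR hg
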